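/- arXiv:1706.09728 — 3 statements merged into one kernel-verified Lean document; each statement's English description precedes it below -/
import Mathlib

section
/- Let X be a centered integrable real random variable admitting a Stein kernel τ with τ(X) integrable. Then the Wasserstein distance to the standard Gaussian satisfies d_W(X, 𝒩) ≤ E[|1 − τ(X)|]. -/
open MeasureTheory ProbabilityTheory

/-- Wasserstein distance between two laws on `ℝ`, as a supremum over
1-Lipschitz test functions. -/
noncomputable def dW (μ ν : Measure ℝ) : ℝ :=
  ⨆ h : {f : ℝ → ℝ // LipschitzWith 1 f}, |(∫ x, h.1 x ∂μ) - ∫ x, h.1 x ∂ν|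

/-- The standard Gaussian law `N(0,1)` on `ℝ`. -/
noncomputable def stdGaussian : Measure ℝ := gaussianReal 0 1

/-- `τ` is a Stein kernel for `X`: `E[X φ(X)] = E[φ'(X) τ(X)]` for every bounded
`C¹` function `φ` with bounded derivative. -/
def IsSteinKernel {Ω : Type*} [MeasureSpace Ω] (X : Ω → ℝ) (τ : ℝ → ℝ) : Prop :=
  ∀ φ : ℝ → ℝ, ContDiff ℝ 1 φ → (∃ C, ∀ x, |φ x| ≤ C) → (∃ C, ∀ x, |deriv φ x| ≤ C) →
    ∫ ω, X ω * φ (X ω) = ∫ ω, deriv φ (X ω) * τ (X ω)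

/-!
The law of `X` is joined to `N(0,1)` along the circle: with `Z` a standard Gaussian independent of
`X`, put `ψ θ = E[h (sin θ * X + cos θ * Z)]`, so that `ψ 0 = E[h Z]` and `ψ (π / 2) = E[h X]`.
For smooth `h`, the Stein kernel applied to the Mehler average `φ x = E[h' (sin θ * x + cos θ * Z)]`
and Gaussian integration by parts in `Z` turn both terms of `ψ' θ` into averages of the same
function:
`ψ' θ = sin θ * E[(τ X - 1) * (cos θ * E[h'' (sin θ * X + cos θ * Z) | X])]`.
The same integration by parts shows that the inner factor is
`E[Z * h' (sin θ * X + cos θ * Z) | X]`, of absolute value at most `E|Z| = √(2 / π)` when `h` is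
1-Lipschitz. Integrating over `[0, π / 2]` gives the bound with the extra factor `√(2 / π) < 1`,
and mollification extends it from smooth to arbitrary Lipschitz test functions.
-/

open Set
open scoped NNReal

section Lipschitz

variable {α : Type*} [MeasurableSpace α] {μ : Measure α} [IsFiniteMeasure μ] {K : ℝ≥0}

lemma integrable_comp_of_lipschitzWith {E F : Type*} [NormedAddCommGroup E]
    [NormedAddCommGroup F] {g : E → F} {f : α → E} (hg : LipschitzWith K g)
    (hf : Integrable f μ) : Integrable (fun a ↦ g (f a)) μ := by
  refine ((integrable_const ‖g 0‖).add (hf.norm.const_mul (K : ℝ))).mono'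
    (hg.continuous.comp_aestronglyMeasurable hf.aestronglyMeasurable) (ae_of_all _ fun a ↦ ?_)
  calc ‖g (f a)‖ ≤ ‖g 0‖ + ‖g (f a) - g 0‖ := norm_le_norm_add_norm_sub' _ _
    _ ≤ ‖g 0‖ + K * ‖f a‖ := by simpa using hg.norm_sub_le (f a) 0

lemma hasDerivAt_integral_comp_of_lipschitzWith {g : ℝ → ℝ} (hg : Differentiable ℝ g)
    (hgK : LipschitzWith K g) {u u' : ℝ → α → ℝ} {bound : α → ℝ} {t₀ : ℝ}
    (hu : ∀ t, Integrable (u t) μ) (hu'_meas : AEStronglyMeasurable (u' t₀) μ)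
    (hu'_le : ∀ t a, |u' t a| ≤ bound a) (hbound : Integrable bound μ)
    (hderiv : ∀ t a, HasDerivAt (u · a) (u' t a) t) :
    HasDerivAt (fun t ↦ ∫ a, g (u t a) ∂μ) (∫ a, deriv g (u t₀ a) * u' t₀ a ∂μ) t₀ := by
  have hcomp (t : ℝ) := integrable_comp_of_lipschitzWith hgK (hu t)
  have hmeas : AEStronglyMeasurable (fun a ↦ deriv g (u t₀ a)) μ :=
    ((measurable_deriv g).comp_aemeasurable (hu t₀).aemeasurable).aestronglyMeasurable
  refine (hasDerivAt_integral_of_dominated_loc_of_deriv_le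
    (F' := fun t a ↦ deriv g (u t a) * u' t a) Filter.univ_mem
    (.of_forall fun t ↦ (hcomp t).aestronglyMeasurable) (hcomp t₀) (hmeas.mul hu'_meas)
    (ae_of_all _ fun a t _ ↦ ?_) (hbound.const_mul (K : ℝ))
    (ae_of_all _ fun a t _ ↦ (hg _).hasDerivAt.comp t (hderiv t a))).2
  calc ‖deriv g (u t a) * u' t a‖ = ‖deriv g (u t a)‖ * |u' t a| := norm_mul _ _
    _ ≤ K * bound a :=
      mul_le_mul (norm_deriv_le_of_lipschitz hgK) (hu'_le t a) (abs_nonneg _) K.2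

end Lipschitz

lemma abs_integral_sub_integral_le {α : Type*} [MeasurableSpace α] {μ : Measure α}
    [IsProbabilityMeasure μ] {f g : α → ℝ} {ε : ℝ} (hf : Integrable f μ) (hg : Integrable g μ)
    (hfg : ∀ a, |f a - g a| ≤ ε) : |(∫ a, f a ∂μ) - ∫ a, g a ∂μ| ≤ ε := by
  rw [← integral_sub hf hg]
  simpa using norm_integral_le_of_norm_le_const (f := fun a ↦ f a - g a) (ae_of_all μ hfg)

section Mollification

open scoped ContDiff Convolution

lemma dist_convolution_le_mul_dist {G F : Type*} [NormedAddCommGroup G] [MeasurableSpace G]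
    [NormedAddCommGroup F] [NormedSpace ℝ F] {μ : Measure G} {φ : G → ℝ} {f : G → F} {K : ℝ≥0}
    (hφ : Integrable φ μ) (hf : LipschitzWith K f)
    (hφf : ConvolutionExists φ f (.lsmul ℝ ℝ) μ) (x y : G) :
    dist ((φ ⋆[.lsmul ℝ ℝ, μ] f) x) ((φ ⋆[.lsmul ℝ ℝ, μ] f) y) ≤
      (∫ t, ‖φ t‖ ∂μ) * (K * dist x y) := by
  rw [dist_eq_norm, convolution_def, convolution_def, ← integral_sub (hφf x) (hφf y),
    ← integral_mul_const]
  refine norm_integral_le_of_norm_le (hφ.norm.mul_const _) (ae_of_all _ fun t ↦ ?_)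
  rw [← map_sub, ContinuousLinearMap.lsmul_apply, norm_smul, ← dist_eq_norm]
  gcongr
  simpa using hf.dist_le_mul (x - t) (y - t)

lemma exists_contDiff_lipschitzWith_abs_sub_le {f : ℝ → ℝ} {K : ℝ≥0} (hf : LipschitzWith K f)
    {ε : ℝ} (hε : 0 < ε) :
    ∃ g : ℝ → ℝ, ContDiff ℝ ∞ g ∧ LipschitzWith K g ∧ (∃ M, LipschitzWith M (deriv g)) ∧
      ∀ x, |g x - f x| ≤ ε := by
  obtain ⟨δ, hδ, hfδ⟩ := Metric.uniformContinuous_iff.mp hf.uniformContinuous ε hε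
  let bump : ContDiffBump (0 : ℝ) := ⟨δ / 2, δ, half_pos hδ, half_lt_self hδ⟩
  let φ : ℝ → ℝ := bump.normed volume
  have hφ : ContDiff ℝ ∞ φ := bump.contDiff_normed
  have hφ_supp : HasCompactSupport φ := bump.hasCompactSupport_normed
  have hf_loc : LocallyIntegrable f := hf.continuous.locallyIntegrable
  have hconv {ρ : ℝ → ℝ} (hρ : Continuous ρ) (hρ_supp : HasCompactSupport ρ) (x y : ℝ) :=
    dist_convolution_le_mul_dist (hρ.integrable_of_hasCompactSupport hρ_supp) hf
      (hρ_supp.convolutionExists_left (.lsmul ℝ ℝ) hρ hf_loc) x y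
  have hφ_norm : ∫ t, ‖φ t‖ = 1 := by
    simp_rw [φ, Real.norm_of_nonneg (bump.nonneg_normed _)]
    exact bump.integral_normed
  refine ⟨φ ⋆[.lsmul ℝ ℝ] f, hφ_supp.contDiff_convolution_left _ hφ hf_loc,
    .of_dist_le_mul fun x y ↦ ?_, ⟨(∫ t, ‖deriv φ t‖).toNNReal * K, ?_⟩, fun x ↦ ?_⟩
  · simpa only [hφ_norm, one_mul] using hconv hφ.continuous hφ_supp x y
  · have hderiv : deriv (φ ⋆[.lsmul ℝ ℝ] f) = deriv φ ⋆[.lsmul ℝ ℝ] f := funext fun x ↦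
      (hφ_supp.hasDerivAt_convolution_left _ (hφ.of_le (mod_cast le_top)) hf_loc x).deriv
    refine hderiv ▸ .of_dist_le_mul fun x y ↦ ?_
    rw [NNReal.coe_mul, Real.coe_toNNReal _ (by positivity), mul_assoc]
    exact hconv (hφ.continuous_deriv (mod_cast le_top)) hφ_supp.deriv x y
  · exact bump.dist_normed_convolution_le hf.continuous.aestronglyMeasurable
      fun y hy ↦ (hfδ (Metric.mem_ball.1 hy)).le

end Mollification

section Gaussian

variable (m : ℝ) (v : ℝ≥0)

lemma hasDerivAt_gaussianPDFReal (x : ℝ) :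
    HasDerivAt (gaussianPDFReal m v) (-((x - m) / v) * gaussianPDFReal m v x) x := by
  have hexponent : HasDerivAt (fun y ↦ -(y - m) ^ 2 / (2 * v)) (-((x - m) / v)) x := by
    refine ((((hasDerivAt_id x).sub_const m).pow 2).neg.div_const _).congr_deriv ?_
    simp only [id]
    field
  refine (hexponent.exp.const_mul (√(2 * Real.pi * v))⁻¹).congr_deriv ?_
  rw [gaussianPDFReal]
  ring

variable {m v}

lemma integrable_gaussianReal_iff {E : Type*} [NormedAddCommGroup E] [NormedSpace ℝ E]
    {f : ℝ → E} (hv : v ≠ 0) :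
    Integrable f (gaussianReal m v) ↔ Integrable fun x ↦ gaussianPDFReal m v x • f x := by
  rw [gaussianReal_of_var_ne_zero _ hv, integrable_withDensity_iff_integrable_smul'
    (measurable_gaussianPDF _ _) (ae_of_all _ fun _ ↦ gaussianPDF_lt_top)]
  simp only [toReal_gaussianPDF]

lemma integrable_fun_id_gaussianReal : Integrable (fun x ↦ x) (gaussianReal m v) :=
  (memLp_id_gaussianReal 1).integrable le_rfl

lemma integral_sub_mul_gaussianReal {g g' : ℝ → ℝ} (hderiv : ∀ x, HasDerivAt g (g' x) x)
    (hg : Integrable g (gaussianReal m v)) (hg' : Integrable g' (gaussianReal m v))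
    (hmul : Integrable (fun x ↦ (x - m) * g x) (gaussianReal m v)) :
    ∫ x, (x - m) * g x ∂gaussianReal m v = v * ∫ x, g' x ∂gaussianReal m v := by
  obtain rfl | hv := eq_or_ne v 0
  · simp
  rw [integrable_gaussianReal_iff hv] at hg hg' hmul
  simp only [integral_gaussianReal_eq_integral_smul hv, smul_eq_mul] at hg hg' hmul ⊢
  have hparts := integral_mul_deriv_eq_deriv_mul_of_integrable
    (fun x _ ↦ hasDerivAt_gaussianPDFReal m v x) (fun x _ ↦ hderiv x) hg'
    ((hmul.const_mul (-(v : ℝ)⁻¹)).congr (ae_of_all _ fun x ↦ by simp; ring)) hg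
  rw [hparts, ← integral_neg, ← integral_const_mul]
  congr with x
  have : (v : ℝ) ≠ 0 := by simpa
  field

lemma integral_abs_sub_gaussianReal :
    ∫ x, |x - m| ∂gaussianReal m v = √(2 * v / Real.pi) := by
  obtain rfl | hv := eq_or_ne v 0
  · simp
  have hhalf : ∫ x in Ioi (0 : ℝ), x * Real.exp (-x ^ 2 / (2 * v)) = v := by
    have hmoment := integral_rpow_mul_exp_neg_mul_rpow (p := 2) (q := 1) (b := (2 * v : ℝ)⁻¹)
      (by norm_num) (by norm_num) (by positivity)
    simpa [Real.rpow_neg_one, neg_div, div_eq_inv_mul, one_add_one_eq_two,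
      mul_comm (2 : ℝ) (v : ℝ)] using hmoment
  calc ∫ x, |x - m| ∂gaussianReal m v
      = ∫ x, gaussianPDFReal 0 v (x - m) * |x - m| := by
        simp [integral_gaussianReal_eq_integral_smul hv, gaussianPDFReal]
    _ = ∫ x, gaussianPDFReal 0 v |x| * |x| := by
        rw [integral_sub_right_eq_self (fun x ↦ gaussianPDFReal 0 v x * |x|)]
        simp [gaussianPDFReal]
    _ = 2 * ∫ x in Ioi (0 : ℝ), (√(2 * Real.pi * v))⁻¹ * (x * Real.exp (-x ^ 2 / (2 * v))) := by
        rw [integral_comp_abs (f := fun x ↦ gaussianPDFReal 0 v x * x)]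
        simp only [gaussianPDFReal, sub_zero, mul_assoc, mul_comm (Real.exp _)]
    _ = √(2 * v / Real.pi) := by
        rw [integral_const_mul, hhalf, eq_comm, Real.sqrt_eq_iff_mul_self_eq (by positivity)
          (by positivity)]
        set s := √(2 * Real.pi * v)
        have hs : s ^ 2 = 2 * Real.pi * v := Real.sq_sqrt (by positivity)
        have hs0 : s ≠ 0 := by positivity
        field_simp
        linear_combination hs

end Gaussian

section Mehler

/-- The Mehler form of the Ornstein–Uhlenbeck semigroup, which interpolates between `∫ g dN(0,1)`
at `θ = 0` and `g x` at `θ = π / 2`. The angle `θ` encodes the usual time `t` by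
`sin θ = exp (-t)`. -/
noncomputable def mehler (θ : ℝ) (g : ℝ → ℝ) (x : ℝ) : ℝ :=
  ∫ z, g (Real.sin θ * x + Real.cos θ * z) ∂gaussianReal 0 1

variable (θ : ℝ) {g : ℝ → ℝ} {C : ℝ} {M : ℝ≥0}

lemma abs_mehler_le (hg : ∀ x, |g x| ≤ C) (x : ℝ) : |mehler θ g x| ≤ C := by
  simpa [mehler] using norm_integral_le_of_norm_le_const (μ := gaussianReal 0 1) (C := C)
    (f := fun z ↦ g (Real.sin θ * x + Real.cos θ * z)) (ae_of_all _ fun _ ↦ hg _)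

lemma continuous_mehler (hg : Continuous g) (hgC : ∀ x, |g x| ≤ C) : Continuous (mehler θ g) :=
  continuous_of_dominated (fun _ ↦ by fun_prop) (fun _ ↦ ae_of_all _ fun _ ↦ hgC _)
    (integrable_const C) (ae_of_all _ fun _ ↦ by fun_prop)

lemma hasDerivAt_mehler (hg : Differentiable ℝ g) (hgM : LipschitzWith M g) (x : ℝ) :
    HasDerivAt (mehler θ g) (Real.sin θ * mehler θ (deriv g) x) x := by
  have hderiv := hasDerivAt_integral_comp_of_lipschitzWith (μ := gaussianReal 0 1) hg hgM
    (u := fun t z ↦ Real.sin θ * t + Real.cos θ * z) (u' := fun _ _ ↦ Real.sin θ)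
    (bound := fun _ ↦ |Real.sin θ|) (t₀ := x)
    (fun t ↦ (integrable_const _).add (integrable_fun_id_gaussianReal.const_mul _))
    (by fun_prop) (fun _ _ ↦ le_rfl) (integrable_const _)
    (fun t z ↦ ((hasDerivAt_const_mul (Real.sin θ)).add_const (Real.cos θ * z)))
  exact hderiv.congr_deriv (by rw [integral_mul_const, mul_comm, mehler])

lemma cos_mul_mehler_deriv (hg : Differentiable ℝ g) (hgC : ∀ x, |g x| ≤ C)
    (hgM : LipschitzWith M g) (x : ℝ) :
    Real.cos θ * mehler θ (deriv g) x =
      ∫ z, z * g (Real.sin θ * x + Real.cos θ * z) ∂gaussianReal 0 1 := by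
  have hcont := hg.continuous
  have hderiv (z : ℝ) : HasDerivAt (fun z ↦ g (Real.sin θ * x + Real.cos θ * z))
      (deriv g (Real.sin θ * x + Real.cos θ * z) * Real.cos θ) z :=
    (hg _).hasDerivAt.comp z ((hasDerivAt_const_mul (Real.cos θ)).const_add (Real.sin θ * x))
  have hint : Integrable (fun z ↦ g (Real.sin θ * x + Real.cos θ * z)) (gaussianReal 0 1) :=
    .of_bound (by fun_prop) C (ae_of_all _ fun _ ↦ hgC _)
  have hint' : Integrable (fun z ↦ deriv g (Real.sin θ * x + Real.cos θ * z) * Real.cos θ)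
      (gaussianReal 0 1) :=
    (Integrable.of_bound ((measurable_deriv g).comp (by fun_prop)).aestronglyMeasurable M
      (ae_of_all _ fun _ ↦ norm_deriv_le_of_lipschitz hgM)).mul_const _
  have hmul : Integrable (fun z ↦ (z - 0) * g (Real.sin θ * x + Real.cos θ * z))
      (gaussianReal 0 1) := by
    simpa only [sub_zero] using integrable_fun_id_gaussianReal.mul_bdd (by fun_prop)
      (ae_of_all _ fun _ ↦ hgC _)
  have hparts := integral_sub_mul_gaussianReal hderiv hint hint' hmul
  rw [integral_mul_const, NNReal.coe_one, one_mul] at hparts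
  simpa only [sub_zero, mehler, mul_comm (Real.cos θ) (∫ _, _ ∂_)] using hparts.symm

lemma abs_cos_mul_mehler_deriv_le (hg : Differentiable ℝ g) (hgC : ∀ x, |g x| ≤ C)
    (hgM : LipschitzWith M g) (x : ℝ) :
    |Real.cos θ * mehler θ (deriv g) x| ≤ √(2 / Real.pi) * C := by
  have habs : ∫ z, |z| ∂gaussianReal 0 1 = √(2 / Real.pi) := by
    simpa using integral_abs_sub_gaussianReal (m := 0) (v := 1)
  rw [cos_mul_mehler_deriv θ hg hgC hgM, ← habs, ← integral_mul_const, ← Real.norm_eq_abs]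
  refine norm_integral_le_of_norm_le (integrable_fun_id_gaussianReal.abs.mul_const C)
    (ae_of_all _ fun z ↦ ?_)
  rw [norm_mul]
  exact mul_le_mul_of_nonneg_left (hgC _) (norm_nonneg _)

end Mehler

section Interpolation

variable {α : Type*} [MeasurableSpace α] {μ : Measure α} [IsFiniteMeasure μ] {g : ℝ → ℝ}

lemma hasDerivAt_integral_comp_sin_mul_add_cos_mul {K : ℝ≥0} (hg : Differentiable ℝ g)
    (hgK : LipschitzWith K g) {Y Z : α → ℝ} (hY : Integrable Y μ) (hZ : Integrable Z μ) (θ : ℝ) :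
    HasDerivAt (fun θ ↦ ∫ a, g (Real.sin θ * Y a + Real.cos θ * Z a) ∂μ)
      (∫ a, deriv g (Real.sin θ * Y a + Real.cos θ * Z a) *
        (Real.cos θ * Y a - Real.sin θ * Z a) ∂μ) θ := by
  refine hasDerivAt_integral_comp_of_lipschitzWith hg hgK
    (u := fun θ a ↦ Real.sin θ * Y a + Real.cos θ * Z a)
    (u' := fun θ a ↦ Real.cos θ * Y a - Real.sin θ * Z a) (bound := fun a ↦ |Y a| + |Z a|)
    (fun θ ↦ (hY.const_mul _).add (hZ.const_mul _))
    ((hY.const_mul _).sub (hZ.const_mul _)).aestronglyMeasurable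
    (fun θ a ↦ (abs_sub _ _).trans ?_) (hY.abs.add hZ.abs) fun θ a ↦ ?_
  · rw [abs_mul, abs_mul]
    exact add_le_add (mul_le_of_le_one_left (abs_nonneg _) (Real.abs_cos_le_one θ))
      (mul_le_of_le_one_left (abs_nonneg _) (Real.abs_sin_le_one θ))
  · exact (((Real.hasDerivAt_sin θ).mul_const _).add
      ((Real.hasDerivAt_cos θ).mul_const _)).congr_deriv (by ring)

lemma integral_prod_mul_cos_sub_sin {X : α → ℝ} (hX : Integrable X μ) {C : ℝ} {M : ℝ≥0}
    (hg : Differentiable ℝ g) (hgC : ∀ x, |g x| ≤ C) (hgM : LipschitzWith M g) (θ : ℝ) :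
    ∫ p, g (Real.sin θ * X p.1 + Real.cos θ * p.2) * (Real.cos θ * X p.1 - Real.sin θ * p.2)
        ∂μ.prod (gaussianReal 0 1) =
      Real.cos θ * (∫ a, X a * mehler θ g (X a) ∂μ) -
        Real.sin θ * (Real.cos θ * ∫ a, mehler θ (deriv g) (X a) ∂μ) := by
  let G (p : α × ℝ) : ℝ := g (Real.sin θ * X p.1 + Real.cos θ * p.2)
  have hX_fst := hX.comp_fst (gaussianReal 0 1)
  have hZ_snd := (integrable_fun_id_gaussianReal (m := 0) (v := 1)).comp_snd μ
  have hG : AEStronglyMeasurable G (μ.prod (gaussianReal 0 1)) :=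
    hg.continuous.comp_aestronglyMeasurable
      ((hX_fst.const_mul _).add (hZ_snd.const_mul _)).aestronglyMeasurable
  have hXG := hX_fst.mul_bdd hG (ae_of_all _ fun _ ↦ hgC _)
  have hZG := hZ_snd.mul_bdd hG (ae_of_all _ fun _ ↦ hgC _)
  have hXG_eq : ∫ p, X p.1 * G p ∂μ.prod (gaussianReal 0 1) =
      ∫ a, X a * mehler θ g (X a) ∂μ := by
    simp only [integral_prod _ hXG, G, integral_const_mul, mehler]
  have hZG_eq : ∫ p, p.2 * G p ∂μ.prod (gaussianReal 0 1) =
      Real.cos θ * ∫ a, mehler θ (deriv g) (X a) ∂μ := by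
    rw [integral_prod _ hZG, ← integral_const_mul]
    simp only [G, cos_mul_mehler_deriv θ hg hgC hgM]
  rw [← hXG_eq, ← hZG_eq, ← integral_const_mul, ← integral_const_mul,
    ← integral_sub (hXG.const_mul _) (hZG.const_mul _)]
  congr with p
  ring

end Interpolation

namespace IsSteinKernel

variable {Ω : Type*} [MeasureSpace Ω] {X : Ω → ℝ} {τ : ℝ → ℝ}

lemma integral_mul_mehler (hkernel : IsSteinKernel X τ) {g : ℝ → ℝ} {C : ℝ} {M : ℝ≥0}
    (hg : ContDiff ℝ 1 g) (hgC : ∀ x, |g x| ≤ C) (hgM : LipschitzWith M g) (θ : ℝ) :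
    ∫ ω, X ω * mehler θ g (X ω) =
      Real.sin θ * ∫ ω, mehler θ (deriv g) (X ω) * τ (X ω) := by
  have hderiv (x : ℝ) := hasDerivAt_mehler θ (hg.differentiable one_ne_zero) hgM x
  have hg'M (x : ℝ) : |deriv g x| ≤ M := norm_deriv_le_of_lipschitz hgM
  have hcont : ContDiff ℝ 1 (mehler θ g) := contDiff_one_iff_deriv.2
    ⟨fun x ↦ (hderiv x).differentiableAt, by
      rw [funext fun x ↦ (hderiv x).deriv]
      exact (continuous_mehler θ (hg.continuous_deriv le_rfl) hg'M).const_mul _⟩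
  rw [hkernel _ hcont ⟨C, abs_mehler_le θ hgC⟩ ⟨M, fun x ↦ ?_⟩, ← integral_const_mul]
  · simp only [(hderiv _).deriv, mul_assoc]
  · rw [(hderiv x).deriv, abs_mul]
    exact (mul_le_of_le_one_left (abs_nonneg _) (Real.abs_sin_le_one θ)).trans
      (abs_mehler_le θ hg'M x)

lemma integral_prod_mul_cos_sub_sin_eq [IsFiniteMeasure (ℙ : Measure Ω)]
    (hkernel : IsSteinKernel X τ) (hX : Integrable X) (hτ : Integrable fun ω ↦ τ (X ω))
    {g : ℝ → ℝ} {C : ℝ} {M : ℝ≥0} (hg : ContDiff ℝ 1 g) (hgC : ∀ x, |g x| ≤ C)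
    (hgM : LipschitzWith M g) (θ : ℝ) :
    ∫ p, g (Real.sin θ * X p.1 + Real.cos θ * p.2) * (Real.cos θ * X p.1 - Real.sin θ * p.2)
        ∂(ℙ : Measure Ω).prod (gaussianReal 0 1) =
      Real.sin θ * ∫ ω, (τ (X ω) - 1) * (Real.cos θ * mehler θ (deriv g) (X ω)) := by
  have hg'M (x : ℝ) : |deriv g x| ≤ M := norm_deriv_le_of_lipschitz hgM
  have hmeas : AEStronglyMeasurable (fun ω ↦ mehler θ (deriv g) (X ω)) :=
    (continuous_mehler θ (hg.continuous_deriv le_rfl) hg'M).comp_aestronglyMeasurable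
      hX.aestronglyMeasurable
  have hbdd : ∀ᵐ ω, ‖mehler θ (deriv g) (X ω)‖ ≤ M := ae_of_all _ fun _ ↦ abs_mehler_le θ hg'M _
  rw [integral_prod_mul_cos_sub_sin hX (hg.differentiable one_ne_zero) hgC hgM,
    hkernel.integral_mul_mehler hg hgC hgM]
  calc Real.cos θ * (Real.sin θ * ∫ ω, mehler θ (deriv g) (X ω) * τ (X ω)) -
        Real.sin θ * (Real.cos θ * ∫ ω, mehler θ (deriv g) (X ω))
      = Real.sin θ * (Real.cos θ * ((∫ ω, mehler θ (deriv g) (X ω) * τ (X ω)) -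
          ∫ ω, mehler θ (deriv g) (X ω))) := by ring
    _ = Real.sin θ * ∫ ω, (τ (X ω) - 1) * (Real.cos θ * mehler θ (deriv g) (X ω)) := by
        rw [← integral_sub (hτ.bdd_mul hmeas hbdd) (.of_bound hmeas M hbdd), ← integral_const_mul]
        congr with ω
        ring

lemma abs_integral_prod_mul_cos_sub_sin_le [IsFiniteMeasure (ℙ : Measure Ω)]
    (hkernel : IsSteinKernel X τ) (hX : Integrable X) (hτ : Integrable fun ω ↦ τ (X ω))
    {g : ℝ → ℝ} {C : ℝ} {M : ℝ≥0} (hg : ContDiff ℝ 1 g) (hgC : ∀ x, |g x| ≤ C)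
    (hgM : LipschitzWith M g) (θ : ℝ) :
    |∫ p, g (Real.sin θ * X p.1 + Real.cos θ * p.2) * (Real.cos θ * X p.1 - Real.sin θ * p.2)
        ∂(ℙ : Measure Ω).prod (gaussianReal 0 1)| ≤
      |Real.sin θ| * (√(2 / Real.pi) * C * ∫ ω, |1 - τ (X ω)|) := by
  rw [hkernel.integral_prod_mul_cos_sub_sin_eq hX hτ hg hgC hgM, abs_mul, ← integral_const_mul]
  gcongr
  rw [← Real.norm_eq_abs]
  refine norm_integral_le_of_norm_le (((integrable_const 1).sub hτ).abs.const_mul _)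
    (ae_of_all _ fun ω ↦ ?_)
  rw [norm_mul, mul_comm, Real.norm_eq_abs, Real.norm_eq_abs, abs_sub_comm]
  exact mul_le_mul_of_nonneg_right
    (abs_cos_mul_mehler_deriv_le θ (hg.differentiable one_ne_zero) hgC hgM _) (abs_nonneg _)

lemma abs_integral_sub_gaussianReal_le_of_contDiff [IsProbabilityMeasure (ℙ : Measure Ω)]
    (hkernel : IsSteinKernel X τ) (hX : Integrable X) (hτ : Integrable fun ω ↦ τ (X ω))
    {h : ℝ → ℝ} {K M : ℝ≥0} (hh : ContDiff ℝ 2 h) (hhK : LipschitzWith K h)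
    (hh'M : LipschitzWith M (deriv h)) :
    |(∫ ω, h (X ω)) - ∫ z, h z ∂gaussianReal 0 1| ≤
      √(2 / Real.pi) * K * ∫ ω, |1 - τ (X ω)| := by
  set R := √(2 / Real.pi) * K * ∫ ω, |1 - τ (X ω)|
  let μ := (ℙ : Measure Ω).prod (gaussianReal 0 1)
  let ψ (θ : ℝ) : ℝ := ∫ p, h (Real.sin θ * X p.1 + Real.cos θ * p.2) ∂μ
  have hψ := hasDerivAt_integral_comp_sin_mul_add_cos_mul (hh.differentiable two_ne_zero) hhK
    (hX.comp_fst (gaussianReal 0 1)) (integrable_fun_id_gaussianReal.comp_snd ℙ)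
  have hψ_zero : ψ 0 = ∫ z, h z ∂gaussianReal 0 1 := by simp [ψ, μ, integral_fun_snd]
  have hψ_pi_div_two : ψ (Real.pi / 2) = ∫ ω, h (X ω) := by
    simp [ψ, μ, integral_fun_fst fun ω ↦ h (X ω)]
  have hbound (θ : ℝ) (hθ : θ ∈ Ioo 0 (Real.pi / 2)) : ‖deriv ψ θ‖ ≤ Real.sin θ * R := by
    have hsin : 0 ≤ Real.sin θ :=
      Real.sin_nonneg_of_nonneg_of_le_pi hθ.1.le (by linarith [hθ.2, Real.pi_pos])
    rw [(hψ θ).deriv]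
    simpa only [abs_of_nonneg hsin, Real.norm_eq_abs] using
      hkernel.abs_integral_prod_mul_cos_sub_sin_le hX hτ hh.deriv'
        (fun _ ↦ norm_deriv_le_of_lipschitz hhK) hh'M θ
  calc |(∫ ω, h (X ω)) - ∫ z, h z ∂gaussianReal 0 1| = ‖ψ (Real.pi / 2) - ψ 0‖ := by
        rw [hψ_zero, hψ_pi_div_two, Real.norm_eq_abs]
    _ ≤ ∫ θ in 0..Real.pi / 2, Real.sin θ * R :=
        norm_sub_le_integral_of_norm_deriv_le_of_le (by positivity)
          (fun θ _ ↦ (hψ θ).continuousAt.continuousWithinAt)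
          (fun θ _ ↦ (hψ θ).differentiableAt.differentiableWithinAt) (ae_of_all _ hbound)
          ((Real.continuous_sin.mul_const R).intervalIntegrable _ _)
    _ = R := by simp

lemma abs_integral_sub_gaussianReal_le [IsProbabilityMeasure (ℙ : Measure Ω)]
    (hkernel : IsSteinKernel X τ) (hX : Integrable X) (hτ : Integrable fun ω ↦ τ (X ω))
    {h : ℝ → ℝ} {K : ℝ≥0} (hh : LipschitzWith K h) :
    |(∫ ω, h (X ω)) - ∫ z, h z ∂gaussianReal 0 1| ≤
      √(2 / Real.pi) * K * ∫ ω, |1 - τ (X ω)| := by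
  refine le_of_forall_pos_le_add fun ε hε ↦ ?_
  obtain ⟨g, hg, hgK, ⟨M, hg'M⟩, hgh⟩ :=
    exists_contDiff_lipschitzWith_abs_sub_le hh (half_pos hε)
  have hX_close := abs_le.1 <| abs_integral_sub_integral_le
    (integrable_comp_of_lipschitzWith hgK hX) (integrable_comp_of_lipschitzWith hh hX)
    (fun ω ↦ hgh (X ω))
  have hZ_close := abs_le.1 <| abs_integral_sub_integral_le
    (integrable_comp_of_lipschitzWith hgK (integrable_fun_id_gaussianReal (m := 0) (v := 1)))
    (integrable_comp_of_lipschitzWith hh integrable_fun_id_gaussianReal) hgh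
  have hsmooth := hkernel.abs_integral_sub_gaussianReal_le_of_contDiff hX hτ
    (contDiff_infty.1 hg 2) hgK hg'M
  rw [abs_le] at hsmooth ⊢
  constructor <;> linarith [hX_close.1, hX_close.2, hZ_close.1, hZ_close.2]

end IsSteinKernel

theorem stein_wasserstein_bound_general
    {Ω : Type*} [MeasureSpace Ω] [IsProbabilityMeasure (ℙ : Measure Ω)]
    (X : Ω → ℝ) (τ : ℝ → ℝ) (hXint : Integrable X)
    (hτint : Integrable (fun ω => τ (X ω)))
    (hkernel : IsSteinKernel X τ) :
    dW (Measure.map X ℙ) stdGaussian ≤ √(2 / Real.pi) * ∫ ω, |1 - τ (X ω)| := by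
  have : Nonempty {f : ℝ → ℝ // LipschitzWith 1 f} := ⟨⟨id, .id⟩⟩
  refine ciSup_le fun h ↦ ?_
  rw [_root_.stdGaussian, integral_map hXint.aemeasurable h.2.continuous.aestronglyMeasurable]
  simpa only [NNReal.coe_one, mul_one] using
    hkernel.abs_integral_sub_gaussianReal_le hXint hτint h.2

theorem stein_wasserstein_bound
    {Ω : Type*} [MeasureSpace Ω] [IsProbabilityMeasure (ℙ : Measure Ω)]
    (X : Ω → ℝ) (τ : ℝ → ℝ) (hXm : Measurable X) (hτm : Measurable τ)
    (hXint : Integrable X) (hXcentered : ∫ ω, X ω = 0)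
    (hτint : Integrable (fun ω => τ (X ω)))
    (hkernel : IsSteinKernel X τ) :
    dW (Measure.map X ℙ) stdGaussian ≤ ∫ ω, |1 - τ (X ω)| :=
  (stein_wasserstein_bound_general X τ hXint hτint hkernel).trans <|
    mul_le_of_le_one_left (integral_nonneg fun _ ↦ abs_nonneg _) <|
      Real.sqrt_le_one.2 <| (div_le_one Real.pi_pos).2 Real.two_le_pi
end

section
/- Let ν > 0 and let X be a centered integrable real random variable with X > −ν almost surely, such that there is a measurable τ : ℝ → ℝ with τ(X) integrable and E[X φ(X)] = E[φ′(X) τ(X)] for every bounded function φ that is continuously differentiable with bounded derivative on (−ν, ∞). Let Γ_ν := 2G − ν where G has the Gamma distribution with shape ν/2 and rate 1. Then d_𝓗(X, Γ_ν) ≤ E[|2(X + ν) − τ(X)|]. -/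
open MeasureTheory ProbabilityTheory

/-- The distance `d_𝓗` between two laws on `ℝ`, as a supremum over `C²` test
functions `h` with `max(‖h‖_∞, ‖h'‖_∞, ‖h''‖_∞) ≤ 1`. -/
noncomputable def dH (μ ν : Measure ℝ) : ℝ :=
  ⨆ h : {f : ℝ → ℝ // ContDiff ℝ 2 f ∧ (∀ x, |f x| ≤ 1) ∧ (∀ x, |deriv f x| ≤ 1) ∧
      ∀ x, |deriv (deriv f) x| ≤ 1},
    |(∫ x, h.1 x ∂μ) - ∫ x, h.1 x ∂ν|

/-- The law of `Γ_ν := 2 G - ν`, where `G` is Gamma-distributed with shape `ν/2`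
and rate `1`. -/
noncomputable def gammaNuLaw (ν : ℝ) : Measure ℝ :=
  Measure.map (fun x => 2 * x - ν) (gammaMeasure (ν / 2) 1)

/-!
For a law `μ` on `ℝ` with mean `m`, put `F_h y := ∫ t in Iic y, (h t - μ[h]) ∂μ`. The function
`f := -F_h / F_id` solves the Stein equation `τ f' + (m - y) f = h - μ[h]`, where `τ` is the Stein
kernel of `μ`. Both `f` and `τ f'` are controlled by one remark: a mean-zero function which is
nonnegative to the left of `y`, or nonpositive to its right, has nonnegative integral over `Iic y`.
Hence `F_h ≤ 0` for monotone `h`, and comparing an `L`-Lipschitz `h` with `L • id` gives `|f| ≤ L`.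
Likewise `τ f' ≤ 0` for convex `h`, and comparing an `h` whose derivative is `K`-Lipschitz with
`K / 2 * t ^ 2` bounds `|τ f'|` by `K / 2` times an explicit quantity, which for a Gamma law equals
`τ`. So `|f'| ≤ K / 2` there, and Stein's identity for `X` turns this bound into one on the
distance.
-/

open Set Filter Topology
open scoped NNReal

theorem exists_forall_add_mul_sub_le_of_convexOn_univ {f : ℝ → ℝ} (hf : ConvexOn ℝ univ f)
    (x : ℝ) : ∃ s, ∀ t, f x + s * (t - x) ≤ f t := by
  have hx : x ∈ interior univ := by simp
  refine ⟨derivWithin f (Ioi x) x, fun t => ?_⟩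
  rcases lt_trichotomy t x with htx | rfl | hxt
  · have h := (hf.slope_le_leftDeriv_of_mem_interior (mem_univ t) hx htx).trans
      (hf.leftDeriv_le_rightDeriv_of_mem_interior hx)
    rw [slope_def_field, div_le_iff₀ (sub_pos.2 htx)] at h
    linarith
  · simp
  · have h := hf.rightDeriv_le_slope_of_mem_interior hx (mem_univ t) hxt
    rw [slope_def_field, le_div_iff₀ (sub_pos.2 hxt)] at h
    linarith

theorem convexOn_univ_add_mul_sq_of_lipschitzWith_deriv {h : ℝ → ℝ} {K : ℝ≥0}
    (hd : Differentiable ℝ h) (hK : LipschitzWith K (deriv h)) :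
    ConvexOn ℝ univ fun t => h t + K / 2 * t ^ 2 := by
  have hderiv (t : ℝ) : HasDerivAt (fun t => h t + K / 2 * t ^ 2) (deriv h t + K * t) t :=
    ((hd t).hasDerivAt.add ((hasDerivAt_pow 2 t).const_mul _)).congr_deriv (by simp; ring)
  refine Monotone.convexOn_univ_of_deriv (fun t => (hderiv t).differentiableAt) ?_
  intro s t hst
  have hdist := hK.dist_le_mul s t
  rw [Real.dist_eq, Real.dist_eq, abs_sub_comm s, abs_of_nonneg (sub_nonneg.2 hst)] at hdist
  rw [(hderiv s).deriv, (hderiv t).deriv]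
  linarith [le_abs_self (deriv h s - deriv h t)]

theorem integrable_of_lipschitzWith {μ : Measure ℝ} [IsFiniteMeasure μ] {h : ℝ → ℝ} {L : ℝ≥0}
    (hid : Integrable id μ) (hL : LipschitzWith L h) : Integrable h μ := by
  refine ((integrable_const |h 0|).add (hid.abs.const_mul L)).mono'
    hL.continuous.aestronglyMeasurable (ae_of_all _ fun t => ?_)
  have hdist := hL.dist_le_mul t 0
  rw [Real.dist_eq, Real.dist_eq, sub_zero] at hdist
  simpa using (abs_sub_abs_le_abs_sub (h t) (h 0)).trans hdist |> sub_le_iff_le_add'.1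

/-- The primitive `F_h` of `h - μ[h]` with respect to `μ`. The density of `μ` times its Stein kernel
is `-F_id`. -/
noncomputable def centeredPrimitive (μ : Measure ℝ) (h : ℝ → ℝ) (y : ℝ) : ℝ :=
  ∫ t in Iic y, (h t - ∫ s, h s ∂μ) ∂μ

/-- The solution `f` of the Stein equation `τ f' + (m - y) f = h - μ[h]`, where `τ` is the Stein
kernel of `μ` and `m` its mean. Where `centeredPrimitive μ id` vanishes, its value is the junk value
`0` of the division. -/
noncomputable def steinSolution (μ : Measure ℝ) (h : ℝ → ℝ) (y : ℝ) : ℝ :=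
  -centeredPrimitive μ h y / centeredPrimitive μ id y

/-- The term `τ f'` of the Stein equation for `f = steinSolution μ h`, obtained by solving the
equation for it, so that `μ` needs no density. -/
noncomputable def steinSlope (μ : Measure ℝ) (h : ℝ → ℝ) (y : ℝ) : ℝ :=
  h y - ∫ t, h t ∂μ + (y - ∫ t, t ∂μ) * steinSolution μ h y

section SteinSolution

variable {μ : Measure ℝ} {g h : ℝ → ℝ} {L K : ℝ≥0} {y : ℝ}

theorem centeredPrimitive_const_mul (c : ℝ) :
    centeredPrimitive μ (fun t => c * h t) y = c * centeredPrimitive μ h y := by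
  simp only [centeredPrimitive]
  rw [← integral_const_mul, integral_const_mul]
  simp only [mul_sub]

theorem steinSlope_const_mul (c : ℝ) :
    steinSlope μ (fun t => c * h t) y = c * steinSlope μ h y := by
  simp only [steinSlope, steinSolution, centeredPrimitive_const_mul, integral_const_mul]
  ring

variable [IsProbabilityMeasure μ]

theorem integrable_sub_integral (hh : Integrable h μ) :
    Integrable (fun t => h t - ∫ s, h s ∂μ) μ :=
  hh.sub (integrable_const _)

theorem centeredPrimitive_eq_neg_setIntegral_Ioi (hh : Integrable h μ) :
    centeredPrimitive μ h y = -∫ t in Ioi y, (h t - ∫ s, h s ∂μ) ∂μ := by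
  have hzero : ∫ t, (h t - ∫ s, h s ∂μ) ∂μ = 0 := by
    rw [integral_sub hh (integrable_const _)]
    simp
  have hsplit := integral_add_compl measurableSet_Iic (integrable_sub_integral hh) (s := Iic y)
  rw [compl_Iic, hzero] at hsplit
  exact eq_neg_of_add_eq_zero_left hsplit

theorem centeredPrimitive_add (hg : Integrable g μ) (hh : Integrable h μ) :
    centeredPrimitive μ (fun t => g t + h t) y
      = centeredPrimitive μ g y + centeredPrimitive μ h y := by
  simp only [centeredPrimitive]
  rw [← integral_add (integrable_sub_integral hg).integrableOn
    (integrable_sub_integral hh).integrableOn, integral_add hg hh]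
  congr 1 with t
  ring

theorem centeredPrimitive_nonneg (hh : Integrable h μ)
    (hsign : (∀ t ≤ y, ∫ s, h s ∂μ ≤ h t) ∨ ∀ t > y, h t ≤ ∫ s, h s ∂μ) :
    0 ≤ centeredPrimitive μ h y := by
  rcases hsign with hleft | hright
  · exact setIntegral_nonneg measurableSet_Iic fun t ht => sub_nonneg.2 (hleft t ht)
  · rw [centeredPrimitive_eq_neg_setIntegral_Ioi hh]
    exact neg_nonneg.2 <|
      setIntegral_nonpos measurableSet_Ioi fun t ht => sub_nonpos.2 (hright t ht)

theorem centeredPrimitive_nonpos_of_monotone (hh : Integrable h μ) (hmono : Monotone h) :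
    centeredPrimitive μ h y ≤ 0 := by
  suffices 0 ≤ centeredPrimitive μ (fun t => -1 * h t) y by
    rw [centeredPrimitive_const_mul] at this
    linarith
  refine centeredPrimitive_nonneg (hh.const_mul _) ?_
  simp only [neg_one_mul, integral_neg, neg_le_neg_iff]
  rcases le_total (h y) (∫ s, h s ∂μ) with hle | hge
  · exact .inl fun t ht => (hmono ht).trans hle
  · exact .inr fun t ht => hge.trans (hmono ht.le)

theorem abs_centeredPrimitive_le_of_lipschitzWith (hid : Integrable id μ) (hL : LipschitzWith L h) :
    |centeredPrimitive μ h y| ≤ L * -centeredPrimitive μ id y := by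
  have hh := integrable_of_lipschitzWith hid hL
  have hdist {s t : ℝ} (hst : s ≤ t) : |h t - h s| ≤ L * (t - s) := by
    simpa [Real.dist_eq, abs_of_nonneg (sub_nonneg.2 hst)] using hL.dist_le_mul t s
  have hup : centeredPrimitive μ (fun t => L * id t + h t) y ≤ 0 :=
    centeredPrimitive_nonpos_of_monotone ((hid.const_mul _).add hh) fun s t hst => by
      simp only [id]
      linarith [(abs_le.1 (hdist hst)).1]
  have hlow : centeredPrimitive μ (fun t => L * id t + -1 * h t) y ≤ 0 :=
    centeredPrimitive_nonpos_of_monotone ((hid.const_mul _).add (hh.const_mul _)) fun s t hst => by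
      simp only [id]
      linarith [(abs_le.1 (hdist hst)).2]
  rw [centeredPrimitive_add (hid.const_mul _) hh, centeredPrimitive_const_mul] at hup
  rw [centeredPrimitive_add (hid.const_mul _) (hh.const_mul _), centeredPrimitive_const_mul,
    centeredPrimitive_const_mul] at hlow
  exact abs_le.2 ⟨by linarith, by linarith⟩

theorem abs_steinSolution_le_of_lipschitzWith (hid : Integrable id μ) (hL : LipschitzWith L h) :
    |steinSolution μ h y| ≤ L := by
  have hT : 0 ≤ -centeredPrimitive μ id y :=
    neg_nonneg.2 (centeredPrimitive_nonpos_of_monotone hid monotone_id)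
  rw [steinSolution, neg_div, ← div_neg, abs_div, abs_of_nonneg hT]
  exact div_le_of_le_mul₀ hT L.2 (abs_centeredPrimitive_le_of_lipschitzWith hid hL)

theorem steinSlope_add (hg : Integrable g μ) (hh : Integrable h μ) :
    steinSlope μ (fun t => g t + h t) y = steinSlope μ g y + steinSlope μ h y := by
  simp only [steinSlope, steinSolution, centeredPrimitive_add hg hh, integral_add hg hh]
  ring

theorem add_mul_integral_sub_le_integral {s : ℝ} (hid : Integrable id μ) (hh : Integrable h μ)
    (hs : ∀ t, h y + s * (t - y) ≤ h t) :
    h y + s * ((∫ t, t ∂μ) - y) ≤ ∫ t, h t ∂μ := by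
  have hlin : Integrable (fun t => s * (t - y)) μ := (hid.sub (integrable_const y)).const_mul s
  have hmean : ∫ t, (t - y) ∂μ = (∫ t, t ∂μ) - y := by
    rw [integral_sub (f := fun t => t) hid (integrable_const y)]
    simp
  calc h y + s * ((∫ t, t ∂μ) - y) = ∫ t, (h y + s * (t - y)) ∂μ := by
        rw [integral_add (integrable_const _) hlin, integral_const_mul, hmean]
        simp
    _ ≤ ∫ t, h t ∂μ := integral_mono ((integrable_const _).add hlin) hh hs

theorem mul_centeredPrimitive_add_nonneg_of_convexOn_univ (hid : Integrable id μ)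
    (hh : Integrable h μ) (hconv : ConvexOn ℝ univ h) :
    0 ≤ ((∫ t, t ∂μ) - y) * centeredPrimitive μ h y
      + (h y - ∫ t, h t ∂μ) * centeredPrimitive μ id y := by
  obtain ⟨s, hs⟩ := exists_forall_add_mul_sub_le_of_convexOn_univ hconv y
  have hmean := add_mul_integral_sub_le_integral hid hh hs
  set m := ∫ t, t ∂μ with hm
  set M := ∫ t, h t ∂μ
  have hslope : h y - M + s * (m - y) ≤ 0 := by linarith
  rw [← centeredPrimitive_const_mul, ← centeredPrimitive_const_mul,
    ← centeredPrimitive_add (hh.const_mul _) (hid.const_mul _)]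
  refine centeredPrimitive_nonneg ((hh.const_mul _).add (hid.const_mul _)) ?_
  rw [integral_add (hh.const_mul _) (hid.const_mul _), integral_const_mul, integral_const_mul]
  simp only [id, ← hm]
  -- The integrand minus its mean is `(m - y) * (h t - h y - s * (t - y))`, whose second factor is
  -- nonnegative, plus `(t - y) * (h y - M + s * (m - y))`, whose second factor is nonpositive.
  rcases le_total y m with hym | hmy
  · exact .inl fun t ht => by
      nlinarith [mul_le_mul_of_nonneg_left (hs t) (sub_nonneg.2 hym),
        mul_nonneg_of_nonpos_of_nonpos (sub_nonpos.2 ht) hslope]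
  · exact .inr fun t ht => by
      nlinarith [mul_le_mul_of_nonpos_left (hs t) (sub_nonpos.2 hmy),
        mul_nonpos_of_nonneg_of_nonpos (sub_nonneg.2 ht.le) hslope]

theorem steinSlope_nonpos_of_convexOn_univ (hid : Integrable id μ) (hh : Integrable h μ)
    (hconv : ConvexOn ℝ univ h) (hy : centeredPrimitive μ id y < 0) : steinSlope μ h y ≤ 0 := by
  have hslope : steinSlope μ h y = (((∫ t, t ∂μ) - y) * centeredPrimitive μ h y
      + (h y - ∫ t, h t ∂μ) * centeredPrimitive μ id y) / centeredPrimitive μ id y := by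
    rw [steinSlope, steinSolution]
    field_simp [hy.ne]
    ring
  rw [hslope]
  exact div_nonpos_of_nonneg_of_nonpos
    (mul_centeredPrimitive_add_nonneg_of_convexOn_univ hid hh hconv) hy.le

theorem abs_steinSlope_le_of_lipschitzWith_deriv (hid : Integrable id μ)
    (hsq : Integrable (fun t => t ^ 2) μ) (hd : Differentiable ℝ h) (hK : LipschitzWith K (deriv h))
    (hh : Integrable h μ) (hy : centeredPrimitive μ id y < 0) :
    |steinSlope μ h y| ≤ -(K / 2 * steinSlope μ (fun t => t ^ 2) y) := by
  have hbound {g : ℝ → ℝ} (hg : Integrable g μ) (hgd : Differentiable ℝ g)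
      (hgK : LipschitzWith K (deriv g)) :
      steinSlope μ g y + K / 2 * steinSlope μ (fun t => t ^ 2) y ≤ 0 := by
    rw [← steinSlope_const_mul, ← steinSlope_add hg (hsq.const_mul _)]
    exact steinSlope_nonpos_of_convexOn_univ hid (hg.add (hsq.const_mul _))
      (convexOn_univ_add_mul_sq_of_lipschitzWith_deriv hgd hgK) hy
  have hderiv : deriv (fun t => -1 * h t) = fun t => -deriv h t := by
    ext t
    simp
  have hneg := hbound (hh.const_mul (-1)) (hd.const_mul (-1)) (hderiv ▸ hK.neg)
  rw [steinSlope_const_mul] at hneg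
  exact abs_le'.2 ⟨by linarith [hbound hh hd hK], by linarith⟩

end SteinSolution

section Density

theorem integrable_withDensity_ofReal_iff {α : Type*} {mα : MeasurableSpace α} {ρ : Measure α}
    {p g : α → ℝ} (hp : Measurable p) (hp0 : 0 ≤ p) :
    Integrable g (ρ.withDensity fun t => ENNReal.ofReal (p t))
      ↔ Integrable (fun t => p t * g t) ρ := by
  rw [integrable_withDensity_iff_integrable_smul' hp.ennreal_ofReal
    (ae_of_all _ fun _ => ENNReal.ofReal_lt_top)]
  simp only [ENNReal.toReal_ofReal (hp0 _), smul_eq_mul]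

theorem setIntegral_withDensity_ofReal {α : Type*} {mα : MeasurableSpace α} {ρ : Measure α}
    {p g : α → ℝ} (hp : Measurable p) (hp0 : 0 ≤ p) {s : Set α} (hs : MeasurableSet s) :
    ∫ t in s, g t ∂(ρ.withDensity fun t => ENNReal.ofReal (p t)) = ∫ t in s, p t * g t ∂ρ := by
  rw [setIntegral_withDensity_eq_setIntegral_toReal_smul hp.ennreal_ofReal
    (ae_of_all _ fun _ => ENNReal.ofReal_lt_top) g hs]
  simp only [ENNReal.toReal_ofReal (hp0 _), smul_eq_mul]

theorem hasDerivAt_setIntegral_Iic {f : ℝ → ℝ} {y : ℝ} (hf : Integrable f) (hc : ContinuousAt f y) :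
    HasDerivAt (fun x => ∫ t in Iic x, f t) (f y) y := by
  have hsplit (x : ℝ) : ∫ t in Iic x, f t = (∫ t in Iic 0, f t) + ∫ t in (0 : ℝ)..x, f t := by
    rw [← intervalIntegral.integral_Iic_sub_Iic hf.integrableOn hf.integrableOn]
    ring
  exact ((intervalIntegral.integral_hasDerivAt_right hf.intervalIntegrable
    hf.aestronglyMeasurable.stronglyMeasurableAtFilter hc).const_add _).congr_of_eventuallyEq
    (.of_forall hsplit)

variable {μ : Measure ℝ} [IsProbabilityMeasure μ] {p h : ℝ → ℝ} {y : ℝ}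

theorem hasDerivAt_centeredPrimitive_of_eq_withDensity (hp : Measurable p) (hp0 : 0 ≤ p)
    (hμ : μ = volume.withDensity fun t => ENNReal.ofReal (p t))
    (hpy : ContinuousAt p y) (hhy : ContinuousAt h y) (hh : Integrable h μ) :
    HasDerivAt (centeredPrimitive μ h) (p y * (h y - ∫ t, h t ∂μ)) y := by
  subst hμ
  unfold centeredPrimitive
  simp only [setIntegral_withDensity_ofReal hp hp0 measurableSet_Iic]
  exact hasDerivAt_setIntegral_Iic
    ((integrable_withDensity_ofReal_iff hp hp0).1 (integrable_sub_integral hh))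
    (hpy.mul (hhy.sub continuousAt_const))

theorem hasDerivAt_steinSolution_of_eq_withDensity (hp : Measurable p) (hp0 : 0 ≤ p)
    (hμ : μ = volume.withDensity fun t => ENNReal.ofReal (p t))
    (hpy : ContinuousAt p y) (hhy : ContinuousAt h y) (hid : Integrable id μ)
    (hh : Integrable h μ) (hy : centeredPrimitive μ id y ≠ 0) :
    HasDerivAt (steinSolution μ h) (p y / -centeredPrimitive μ id y * steinSlope μ h y) y := by
  refine ((hasDerivAt_centeredPrimitive_of_eq_withDensity hp hp0 hμ hpy hhy hh).neg.div
    (hasDerivAt_centeredPrimitive_of_eq_withDensity hp hp0 hμ hpy continuousAt_id hid)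
    hy).congr_deriv ?_
  simp only [steinSlope, steinSolution, id, Pi.neg_apply]
  field_simp
  ring

end Density

section Gamma

variable {a r y : ℝ}

theorem setIntegral_Ioi_mul_sub_rpow_mul_exp {s : ℝ} (hs : 0 < s) (hr : 0 < r) (hy : 0 ≤ y) :
    ∫ t in Ioi y, (s * (t ^ (s - 1) * Real.exp (-r * t)) - r * (t ^ s * Real.exp (-r * t)))
      = -(y ^ s * Real.exp (-r * y)) := by
  have hint {q : ℝ} (hq : -1 < q) : IntegrableOn (fun t => t ^ q * Real.exp (-r * t)) (Ioi y) := by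
    simpa only [Real.rpow_one] using
      (integrableOn_rpow_mul_exp_neg_mul_rpow hq one_pos hr).mono_set (Ioi_subset_Ioi hy)
  have hderiv (t : ℝ) (ht : t ∈ Ioi y) : HasDerivAt (fun t => t ^ s * Real.exp (-r * t))
      (s * (t ^ (s - 1) * Real.exp (-r * t)) - r * (t ^ s * Real.exp (-r * t))) t := by
    refine ((Real.hasDerivAt_rpow_const (.inl (hy.trans_lt ht).ne')).mul
      ((hasDerivAt_id t).const_mul (-r)).exp).congr_deriv ?_
    simp only [id]
    ring
  have hcont : Continuous fun t => t ^ s * Real.exp (-r * t) := by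
    have := Real.continuous_rpow_const hs.le
    fun_prop
  rw [integral_Ioi_of_hasDerivAt_of_tendsto hcont.continuousWithinAt hderiv
    (((hint (by linarith)).const_mul _).sub ((hint (by linarith)).const_mul _))
    (tendsto_rpow_mul_exp_neg_mul_atTop_nhds_zero s r hr), zero_sub]

theorem gammaPDFReal_mul_pow {t : ℝ} (ht : 0 < t) (n : ℕ) :
    gammaPDFReal a r t * t ^ n = r ^ a / Real.Gamma a * (t ^ (a + n - 1) * Real.exp (-r * t)) := by
  rw [gammaPDFReal, if_pos ht.le, add_sub_right_comm, Real.rpow_add_natCast ht.ne', neg_mul]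
  ring

theorem gammaPDFReal_mul_pow_succ {t : ℝ} (ha : 0 < a) (ht : 0 ≤ t) (n : ℕ) :
    gammaPDFReal a r t * t ^ (n + 1)
      = r ^ a / Real.Gamma a * (t ^ (a + n) * Real.exp (-r * t)) := by
  rcases ht.eq_or_lt with rfl | ht
  · simp [Real.zero_rpow (show a + n ≠ 0 by positivity)]
  · rw [gammaPDFReal_mul_pow ht, Nat.cast_succ, ← add_assoc, add_sub_cancel_right]

theorem integrable_pow_gammaMeasure (ha : 0 < a) (hr : 0 < r) (n : ℕ) :
    Integrable (fun t => t ^ n) (gammaMeasure a r) := by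
  refine (integrable_withDensity_ofReal_iff (measurable_gammaPDFReal a r)
    (gammaPDFReal_nonneg ha hr)).2 ?_
  have hmoment := integrableOn_rpow_mul_exp_neg_mul_rpow (s := a + n - 1) (p := 1) (b := r)
    (by linarith [n.cast_nonneg (α := ℝ)]) one_pos hr
  simp only [Real.rpow_one] at hmoment
  have hIoi : IntegrableOn (fun t => gammaPDFReal a r t * t ^ n) (Ioi 0) :=
    IntegrableOn.congr_fun (hmoment.const_mul (r ^ a / Real.Gamma a))
      (fun t ht => (gammaPDFReal_mul_pow ht n).symm) measurableSet_Ioi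
  have hIci := (integrableOn_Ici_iff_integrableOn_Ioi enorm_ne_top).2 hIoi
  refine hIci.integrable_of_forall_notMem_eq_zero fun t ht => ?_
  rw [gammaPDFReal, if_neg (mem_Ici.not.1 ht), zero_mul]

theorem integrable_id_gammaMeasure (ha : 0 < a) (hr : 0 < r) : Integrable id (gammaMeasure a r) :=
  (integrable_pow_gammaMeasure ha hr 1).congr (.of_forall pow_one)

theorem mul_setIntegral_Ioi_pow_succ_gammaMeasure (ha : 0 < a) (hr : 0 < r) (hy : 0 ≤ y) (n : ℕ) :
    r * ∫ t in Ioi y, t ^ (n + 1) ∂(gammaMeasure a r)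
      = (a + n) * (∫ t in Ioi y, t ^ n ∂(gammaMeasure a r))
        + gammaPDFReal a r y * y ^ (n + 1) := by
  have hn := (integrable_pow_gammaMeasure ha hr n).const_mul (a + n) |>.integrableOn (s := Ioi y)
  have hsucc := (integrable_pow_gammaMeasure ha hr (n + 1)).const_mul r
    |>.integrableOn (s := Ioi y)
  have hparts : ∫ t in Ioi y, ((a + n) * t ^ n - r * t ^ (n + 1)) ∂(gammaMeasure a r)
      = -(gammaPDFReal a r y * y ^ (n + 1)) := by
    rw [gammaPDFReal_mul_pow_succ ha hy, ← mul_neg,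
      ← setIntegral_Ioi_mul_sub_rpow_mul_exp (by positivity) hr hy, ← integral_const_mul]
    refine (setIntegral_withDensity_ofReal (measurable_gammaPDFReal a r)
      (gammaPDFReal_nonneg ha hr) measurableSet_Ioi).trans
      (setIntegral_congr_fun measurableSet_Ioi fun t ht => ?_)
    have ht0 : 0 < t := hy.trans_lt ht
    linear_combination (a + n) * gammaPDFReal_mul_pow (a := a) (r := r) ht0 n
      - r * gammaPDFReal_mul_pow_succ (r := r) ha ht0.le n
  rw [integral_sub hn hsucc, integral_const_mul, integral_const_mul] at hparts
  linarith

theorem ae_gammaMeasure_pos (a r : ℝ) : ∀ᵐ t ∂(gammaMeasure a r), 0 < t := by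
  refine (ae_withDensity_iff (measurable_gammaPDFReal a r).ennreal_ofReal).2 ?_
  filter_upwards [compl_mem_ae_iff.2 (measure_singleton 0)] with t ht0 hpdf
  by_contra! hle
  exact hpdf (gammaPDF_of_neg (hle.lt_of_ne ht0))

theorem mul_integral_pow_succ_gammaMeasure (ha : 0 < a) (hr : 0 < r) (n : ℕ) :
    r * ∫ t, t ^ (n + 1) ∂(gammaMeasure a r) = (a + n) * ∫ t, t ^ n ∂(gammaMeasure a r) := by
  have hrestrict : (gammaMeasure a r).restrict (Ioi 0) = gammaMeasure a r :=
    Measure.restrict_eq_self_of_ae_mem (ae_gammaMeasure_pos a r)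
  simpa [hrestrict] using mul_setIntegral_Ioi_pow_succ_gammaMeasure ha hr le_rfl n

theorem integral_id_gammaMeasure (ha : 0 < a) (hr : 0 < r) :
    ∫ t, t ∂(gammaMeasure a r) = a / r := by
  have := isProbabilityMeasure_gammaMeasure ha hr
  rw [eq_div_iff hr.ne', mul_comm]
  simpa using mul_integral_pow_succ_gammaMeasure ha hr 0

theorem integral_sq_gammaMeasure (ha : 0 < a) (hr : 0 < r) :
    ∫ t, t ^ 2 ∂(gammaMeasure a r) = a * (a + 1) / r ^ 2 := by
  have hrec := mul_integral_pow_succ_gammaMeasure ha hr 1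
  simp only [pow_one, integral_id_gammaMeasure ha hr] at hrec
  field_simp at hrec ⊢
  push_cast at hrec
  linarith

theorem centeredPrimitive_id_gammaMeasure (ha : 0 < a) (hr : 0 < r) (hy : 0 ≤ y) :
    centeredPrimitive (gammaMeasure a r) id y = -(y / r * gammaPDFReal a r y) := by
  have := isProbabilityMeasure_gammaMeasure ha hr
  have hid := integrable_id_gammaMeasure ha hr
  have hrec := mul_setIntegral_Ioi_pow_succ_gammaMeasure ha hr hy 0
  simp only [zero_add, pow_one, pow_zero, Nat.cast_zero, add_zero] at hrec
  rw [centeredPrimitive_eq_neg_setIntegral_Ioi hid]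
  simp only [id, integral_id_gammaMeasure ha hr]
  rw [integral_sub (f := fun t => t) hid.integrableOn (integrable_const _).integrableOn,
    ← mul_one (a / r), integral_const_mul]
  field_simp
  linarith

theorem centeredPrimitive_sq_gammaMeasure (ha : 0 < a) (hr : 0 < r) (hy : 0 ≤ y) :
    centeredPrimitive (gammaMeasure a r) (fun t => t ^ 2) y
      = -(y / r * gammaPDFReal a r y) * (y + (a + 1) / r) := by
  have := isProbabilityMeasure_gammaMeasure ha hr
  have hsq := integrable_pow_gammaMeasure ha hr 2
  have hrec₀ := mul_setIntegral_Ioi_pow_succ_gammaMeasure ha hr hy 0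
  have hrec₁ := mul_setIntegral_Ioi_pow_succ_gammaMeasure ha hr hy 1
  simp only [zero_add, pow_one, pow_zero, Nat.cast_zero, add_zero, Nat.cast_one, one_add_one_eq_two]
    at hrec₀ hrec₁
  rw [centeredPrimitive_eq_neg_setIntegral_Ioi hsq, integral_sq_gammaMeasure ha hr,
    integral_sub hsq.integrableOn (integrable_const _).integrableOn,
    ← mul_one (a * (a + 1) / r ^ 2), integral_const_mul]
  field_simp
  linear_combination -r * hrec₁ - (a + 1) * hrec₀

theorem steinSlope_sq_gammaMeasure (ha : 0 < a) (hr : 0 < r) (hy : 0 < y) :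
    steinSlope (gammaMeasure a r) (fun t => t ^ 2) y = -(y / r) := by
  have hpdf := gammaPDFReal_pos ha hr hy
  rw [steinSlope, steinSolution, centeredPrimitive_sq_gammaMeasure ha hr hy.le,
    centeredPrimitive_id_gammaMeasure ha hr hy.le, integral_sq_gammaMeasure ha hr,
    integral_id_gammaMeasure ha hr]
  field_simp
  ring

theorem abs_steinSlope_gammaMeasure_le {h : ℝ → ℝ} {K : ℝ≥0} (ha : 0 < a) (hr : 0 < r)
    (hy : 0 < y) (hd : Differentiable ℝ h) (hK : LipschitzWith K (deriv h))
    (hh : Integrable h (gammaMeasure a r)) :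
    |steinSlope (gammaMeasure a r) h y| ≤ K / 2 * (y / r) := by
  have := isProbabilityMeasure_gammaMeasure ha hr
  have hid := integrable_id_gammaMeasure ha hr
  have hneg : centeredPrimitive (gammaMeasure a r) id y < 0 := by
    have hpdf := gammaPDFReal_pos ha hr hy
    rw [centeredPrimitive_id_gammaMeasure ha hr hy.le, neg_lt_zero]
    positivity
  have hle := abs_steinSlope_le_of_lipschitzWith_deriv hid
    (integrable_pow_gammaMeasure ha hr 2) hd hK hh hneg
  rwa [steinSlope_sq_gammaMeasure ha hr hy, mul_neg, neg_neg] at hle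

theorem continuousAt_gammaPDFReal (hy : 0 < y) : ContinuousAt (gammaPDFReal a r) y := by
  have hformula : ContinuousAt
      (fun x => r ^ a / Real.Gamma a * x ^ (a - 1) * Real.exp (-(r * x))) y :=
    (continuousAt_const.mul (Real.continuousAt_rpow_const _ _ (.inl hy.ne'))).mul (by fun_prop)
  refine hformula.congr ?_
  filter_upwards [Ioi_mem_nhds hy] with x hx
  rw [gammaPDFReal, if_pos (le_of_lt hx)]

theorem hasDerivAt_steinSolution_gammaMeasure {h : ℝ → ℝ} (ha : 0 < a) (hr : 0 < r) (hy : 0 < y)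
    (hhy : ContinuousAt h y) (hh : Integrable h (gammaMeasure a r)) :
    HasDerivAt (steinSolution (gammaMeasure a r) h)
      (r / y * steinSlope (gammaMeasure a r) h y) y := by
  have := isProbabilityMeasure_gammaMeasure ha hr
  have hpdf := gammaPDFReal_pos ha hr hy
  have hid := integrable_id_gammaMeasure ha hr
  have hT := centeredPrimitive_id_gammaMeasure ha hr hy.le
  refine (hasDerivAt_steinSolution_of_eq_withDensity (μ := gammaMeasure a r)
    (measurable_gammaPDFReal a r) (gammaPDFReal_nonneg ha hr) rfl
    (continuousAt_gammaPDFReal hy) hhy hid hh ?_).congr_deriv ?_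
  · rw [hT, neg_ne_zero]
    positivity
  · rw [hT]
    field_simp

end Gamma

section GammaNu

variable {ν : ℝ} {h : ℝ → ℝ} {L K : ℝ≥0}

theorem integral_gammaNuLaw (hh : Continuous h) :
    ∫ x, h x ∂(gammaNuLaw ν) = ∫ t, h (2 * t - ν) ∂(gammaMeasure (ν / 2) 1) :=
  integral_map (by fun_prop) hh.aestronglyMeasurable

theorem lipschitzWith_comp_mul_sub (hL : LipschitzWith L h) (b c : ℝ) :
    LipschitzWith (L * ‖b‖₊) fun t => h (b * t - c) :=
  hL.comp <| LipschitzWith.of_dist_le_mul fun s t => by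
    simp [Real.dist_eq, ← mul_sub, abs_mul]

theorem lipschitzWith_deriv_comp_mul_sub (hK : LipschitzWith K (deriv h)) (b c : ℝ) :
    LipschitzWith (‖b‖₊ * (K * ‖b‖₊)) (deriv fun t => h (b * t - c)) := by
  have hderiv : (deriv fun t => h (b * t - c)) = fun t => b • deriv h (b * t - c) := by
    ext t
    rw [deriv_comp_mul_left b (fun u => h (u - c)), deriv_comp_sub_const]
  exact hderiv ▸ (lipschitzWith_smul b).comp (lipschitzWith_comp_mul_sub hK b c)

/-- The bounded solution `φ` of the Stein equation `2 (x + ν) φ' - x φ = h - Γ_ν[h]` of the centred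
Gamma law, transported from `gammaMeasure (ν / 2) 1` by `x = 2 t - ν`. -/
noncomputable def gammaNuSolution (ν : ℝ) (h : ℝ → ℝ) (x : ℝ) : ℝ :=
  steinSolution (gammaMeasure (ν / 2) 1) (fun t => h (2 * t - ν)) ((x + ν) / 2) / 2

/-- The derivative of `gammaNuSolution ν h` on `(-ν, ∞)`, read off the Stein equation. -/
noncomputable def gammaNuSolutionDeriv (ν : ℝ) (h : ℝ → ℝ) (x : ℝ) : ℝ :=
  (h x - ∫ t, h t ∂(gammaNuLaw ν) + x * gammaNuSolution ν h x) / (2 * (x + ν))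

theorem abs_gammaNuSolution_le (hν : 0 < ν) (hL : LipschitzWith L h) (x : ℝ) :
    |gammaNuSolution ν h x| ≤ L := by
  have := isProbabilityMeasure_gammaMeasure (half_pos hν) one_pos
  have hle := abs_steinSolution_le_of_lipschitzWith (y := (x + ν) / 2)
    (integrable_id_gammaMeasure (half_pos hν) one_pos) (lipschitzWith_comp_mul_sub hL 2 ν)
  simp only [NNReal.coe_mul, coe_nnnorm, Real.norm_two] at hle
  rw [gammaNuSolution, abs_div, abs_two]
  linarith

theorem gammaNuSolutionDeriv_eq (hν : 0 < ν) (hh : Continuous h) (x : ℝ) :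
    gammaNuSolutionDeriv ν h x
      = steinSlope (gammaMeasure (ν / 2) 1) (fun t => h (2 * t - ν)) ((x + ν) / 2)
        / (2 * (x + ν)) := by
  rw [gammaNuSolutionDeriv, steinSlope, integral_gammaNuLaw hh, gammaNuSolution,
    integral_id_gammaMeasure (half_pos hν) one_pos]
  ring_nf

theorem abs_gammaNuSolutionDeriv_le (hν : 0 < ν) (hL : LipschitzWith L h)
    (hd : Differentiable ℝ h) (hK : LipschitzWith K (deriv h)) {x : ℝ} (hx : -ν < x) :
    |gammaNuSolutionDeriv ν h x| ≤ K / 2 := by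
  have := isProbabilityMeasure_gammaMeasure (half_pos hν) one_pos
  have hxν : 0 < x + ν := by linarith
  have hle := abs_steinSlope_gammaMeasure_le (half_pos hν) one_pos (half_pos hxν)
    (by fun_prop) (lipschitzWith_deriv_comp_mul_sub hK 2 ν)
    (integrable_of_lipschitzWith (integrable_id_gammaMeasure (half_pos hν) one_pos)
      (lipschitzWith_comp_mul_sub hL 2 ν))
  rw [gammaNuSolutionDeriv_eq hν hL.continuous, abs_div,
    abs_of_pos (by positivity : 0 < 2 * (x + ν)), div_le_iff₀ (by positivity)]
  simp only [NNReal.coe_mul, coe_nnnorm, Real.norm_two] at hle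
  linarith

theorem hasDerivAt_gammaNuSolution (hν : 0 < ν) (hL : LipschitzWith L h) {x : ℝ} (hx : -ν < x) :
    HasDerivAt (gammaNuSolution ν h) (gammaNuSolutionDeriv ν h x) x := by
  have := isProbabilityMeasure_gammaMeasure (half_pos hν) one_pos
  have hxν : 0 < x + ν := by linarith
  have hcomp := lipschitzWith_comp_mul_sub hL 2 ν
  have houter := hasDerivAt_steinSolution_gammaMeasure (half_pos hν) one_pos (half_pos hxν)
    hcomp.continuous.continuousAt
    (integrable_of_lipschitzWith (integrable_id_gammaMeasure (half_pos hν) one_pos) hcomp)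
  have hinner : HasDerivAt (fun x => (x + ν) / 2) (1 / 2) x :=
    ((hasDerivAt_id x).add_const ν).div_const 2
  refine ((houter.comp x hinner).div_const 2).congr_deriv ?_
  rw [gammaNuSolutionDeriv_eq hν hL.continuous]
  field_simp

theorem continuousOn_gammaNuSolutionDeriv (hν : 0 < ν) (hL : LipschitzWith L h) :
    ContinuousOn (gammaNuSolutionDeriv ν h) (Ioi (-ν)) := by
  have hsol : ContinuousOn (gammaNuSolution ν h) (Ioi (-ν)) := fun x hx =>
    (hasDerivAt_gammaNuSolution hν hL hx).continuousAt.continuousWithinAt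
  refine ((hL.continuous.continuousOn.sub continuousOn_const).add (continuousOn_id.mul hsol)).div
    (by fun_prop) fun x hx => ?_
  have : 0 < x + ν := by linarith [mem_Ioi.1 hx]
  positivity

theorem gammaNuSolution_equation {x : ℝ} (hx : -ν < x) :
    2 * (x + ν) * gammaNuSolutionDeriv ν h x - x * gammaNuSolution ν h x
      = h x - ∫ t, h t ∂(gammaNuLaw ν) := by
  have : x + ν ≠ 0 := by linarith
  rw [gammaNuSolutionDeriv]
  field_simp
  ring

end GammaNu

section Comparison

variable {Ω : Type*} {mΩ : MeasurableSpace Ω} {P : Measure Ω} {X : Ω → ℝ}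

/-- `τ` is a Stein kernel of `X` on `s`: `E[X φ(X)] = E[φ'(X) τ(X)]` for every bounded `φ` which is
continuously differentiable with bounded derivative on `s`. The derivative is the separate argument
`φ'`, since `φ` may fail to be differentiable outside `s`. -/
def HasSteinKernelOn (P : Measure Ω) (X : Ω → ℝ) (τ : ℝ → ℝ) (s : Set ℝ) : Prop :=
  ∀ φ φ' : ℝ → ℝ, (∃ C, ∀ x, |φ x| ≤ C) → (∀ x ∈ s, HasDerivAt φ (φ' x) x) →
    ContinuousOn φ' s → (∃ C, ∀ x ∈ s, |φ' x| ≤ C) →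
    ∫ ω, X ω * φ (X ω) ∂P = ∫ ω, φ' (X ω) * τ (X ω) ∂P

theorem aestronglyMeasurable_comp_of_continuousOn {f : ℝ → ℝ} {s : Set ℝ} (hX : AEMeasurable X P)
    (hs : MeasurableSet s) (hXs : ∀ᵐ ω ∂P, X ω ∈ s) (hf : ContinuousOn f s) :
    AEStronglyMeasurable (fun ω => f (X ω)) P := by
  have hrestrict : (P.map X).restrict s = P.map X :=
    Measure.restrict_eq_self_of_ae_mem ((ae_map_iff hX hs).2 hXs)
  exact (hrestrict ▸ hf.aestronglyMeasurable hs).comp_aemeasurable hX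

theorem abs_integral_sub_le_of_hasSteinKernelOn [IsProbabilityMeasure P]
    {τ τ₀ h φ φ' : ℝ → ℝ} {s : Set ℝ} {B C m : ℝ} (hker : HasSteinKernelOn P X τ s)
    (hs : MeasurableSet s) (hX : Integrable X P) (hXs : ∀ᵐ ω ∂P, X ω ∈ s)
    (hτ : Integrable (fun ω => τ (X ω)) P) (hτ₀ : Integrable (fun ω => τ₀ (X ω)) P)
    (hφ : ∀ x, |φ x| ≤ B) (hderiv : ∀ x ∈ s, HasDerivAt φ (φ' x) x) (hcont : ContinuousOn φ' s)
    (hφ' : ∀ x ∈ s, |φ' x| ≤ C) (hstein : ∀ x ∈ s, τ₀ x * φ' x - x * φ x = h x - m) :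
    |∫ ω, h (X ω) ∂P - m| ≤ C * ∫ ω, |τ₀ (X ω) - τ (X ω)| ∂P := by
  have hφX : AEStronglyMeasurable (fun ω => φ (X ω)) P :=
    aestronglyMeasurable_comp_of_continuousOn hX.aemeasurable hs hXs fun x hx =>
      (hderiv x hx).continuousAt.continuousWithinAt
  have hφX' : AEStronglyMeasurable (fun ω => φ' (X ω)) P :=
    aestronglyMeasurable_comp_of_continuousOn hX.aemeasurable hs hXs hcont
  have hφ'_ae : ∀ᵐ ω ∂P, |φ' (X ω)| ≤ C := hXs.mono fun ω hω => hφ' _ hω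
  have hint : Integrable (fun ω => X ω * φ (X ω)) P :=
    hX.mul_bdd hφX (ae_of_all _ fun ω => hφ (X ω))
  have hint_τ : Integrable (fun ω => φ' (X ω) * τ (X ω)) P := hτ.bdd_mul hφX' hφ'_ae
  have hint_τ₀ : Integrable (fun ω => φ' (X ω) * τ₀ (X ω)) P := hτ₀.bdd_mul hφX' hφ'_ae
  have hh_ae : (fun ω => h (X ω)) =ᵐ[P]
      fun ω => m + (φ' (X ω) * τ₀ (X ω) - X ω * φ (X ω)) := by
    filter_upwards [hXs] with ω hω
    linarith [hstein _ hω]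
  have hdiff : ∫ ω, h (X ω) ∂P - m = ∫ ω, φ' (X ω) * (τ₀ (X ω) - τ (X ω)) ∂P := by
    simp only [mul_sub]
    rw [integral_congr_ae hh_ae,
      integral_add (g := fun ω => φ' (X ω) * τ₀ (X ω) - X ω * φ (X ω)) (integrable_const m)
        (hint_τ₀.sub hint),
      integral_sub hint_τ₀ hint, integral_sub hint_τ₀ hint_τ,
      hker φ φ' ⟨B, hφ⟩ hderiv hcont ⟨C, hφ'⟩]
    simp
  rw [hdiff, ← integral_const_mul, ← Real.norm_eq_abs]
  refine norm_integral_le_of_norm_le ((hτ₀.sub hτ).abs.const_mul C) ?_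
  filter_upwards [hφ'_ae] with ω hω
  rw [Real.norm_eq_abs, abs_mul]
  exact mul_le_mul_of_nonneg_right hω (abs_nonneg _)

variable [IsProbabilityMeasure P] {ν : ℝ} {τ : ℝ → ℝ}

theorem abs_integral_sub_integral_gammaNuLaw_le (hν : 0 < ν) (hX : Integrable X P)
    (hXν : ∀ᵐ ω ∂P, -ν < X ω) (hτ : Integrable (fun ω => τ (X ω)) P)
    (hker : HasSteinKernelOn P X τ (Ioi (-ν))) {h : ℝ → ℝ} {L K : ℝ≥0} (hL : LipschitzWith L h)
    (hd : Differentiable ℝ h) (hK : LipschitzWith K (deriv h)) :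
    |∫ ω, h (X ω) ∂P - ∫ x, h x ∂(gammaNuLaw ν)|
      ≤ K / 2 * ∫ ω, |2 * (X ω + ν) - τ (X ω)| ∂P :=
  abs_integral_sub_le_of_hasSteinKernelOn (τ₀ := fun x => 2 * (x + ν)) hker measurableSet_Ioi hX
    hXν hτ ((hX.add (integrable_const ν)).const_mul 2) (abs_gammaNuSolution_le hν hL)
    (fun _ => hasDerivAt_gammaNuSolution hν hL) (continuousOn_gammaNuSolutionDeriv hν hL)
    (fun _ => abs_gammaNuSolutionDeriv_le hν hL hd hK) fun _ => gammaNuSolution_equation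

theorem stein_gamma_bound_general (hν : 0 < ν) (hX : Integrable X P)
    (hXν : ∀ᵐ ω ∂P, -ν < X ω) (hτ : Integrable (fun ω => τ (X ω)) P)
    (hker : HasSteinKernelOn P X τ (Ioi (-ν))) :
    dH (P.map X) (gammaNuLaw ν) ≤ 1 / 2 * ∫ ω, |2 * (X ω + ν) - τ (X ω)| ∂P := by
  refine Real.iSup_le ?_ (by positivity)
  rintro ⟨h, hC2, -, hh', hh''⟩
  have hd : Differentiable ℝ h := hC2.differentiable two_ne_zero
  have hd' : Differentiable ℝ (deriv h) :=
    (contDiff_succ_iff_deriv.1 (hC2 : ContDiff ℝ (1 + 1) h)).2.2.differentiable one_ne_zero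
  rw [integral_map hX.aemeasurable hd.continuous.aestronglyMeasurable]
  exact abs_integral_sub_integral_gammaNuLaw_le (L := 1) (K := 1) hν hX hXν hτ hker
    (lipschitzWith_of_nnnorm_deriv_le hd hh') hd (lipschitzWith_of_nnnorm_deriv_le hd' hh'')

end Comparison

theorem stein_gamma_bound
    {Ω : Type*} [MeasureSpace Ω] [IsProbabilityMeasure (ℙ : Measure Ω)]
    (ν : ℝ) (hν : 0 < ν)
    (X : Ω → ℝ) (τ : ℝ → ℝ) (hXm : Measurable X) (hτm : Measurable τ)
    (hXint : Integrable X) (hXcentered : ∫ ω, X ω = 0)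
    (hsupp : ∀ᵐ ω, -ν < X ω)
    (hτint : Integrable (fun ω => τ (X ω)))
    (hkernel : ∀ φ φ' : ℝ → ℝ, (∃ C, ∀ x, |φ x| ≤ C) →
      (∀ x ∈ Set.Ioi (-ν), HasDerivAt φ (φ' x) x) →
      ContinuousOn φ' (Set.Ioi (-ν)) →
      (∃ C, ∀ x ∈ Set.Ioi (-ν), |φ' x| ≤ C) →
      ∫ ω, X ω * φ (X ω) = ∫ ω, φ' (X ω) * τ (X ω)) :
    dH (Measure.map X ℙ) (gammaNuLaw ν) ≤ ∫ ω, |2 * (X ω + ν) - τ (X ω)| :=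
  (stein_gamma_bound_general hν hXint hsupp hτint hkernel).trans <|
    mul_le_of_le_one_left (integral_nonneg fun _ => abs_nonneg _) one_half_lt_one.le
end

section
/- Let α > 0 and let ρ_α(x) := α (α/(α+1) + x)^{α−1} for x ∈ (−α/(α+1), 1/(α+1)) be the density of the centered Beta(α,1) distribution. Then for every y in (−α/(α+1), 1/(α+1)), −(1/ρ_α(y)) ∫_{−α/(α+1)}^y x ρ_α(x) dx = (1/(α+1)) (α/(α+1) + y) (1/(α+1) − y). -/
open MeasureTheory Real

/-- Density of the centered Beta(α,1) distribution on
`(-α/(α+1), 1/(α+1))`. -/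
noncomputable def centeredBetaDensity (α x : ℝ) : ℝ :=
  α * (α / (α + 1) + x) ^ (α - 1)

/-!
With `c = α/(α+1)`, the function `x ↦ c (c + x)^α (1/(α+1) - x)` vanishes at the left endpoint `-c`
and has derivative `-x ρ_α(x)`, since `α (1/(α+1) - x) - (c + x) = -(α + 1) x`. The Stein kernel is
the quotient of this primitive by `ρ_α`, and `(c + y)^α = (c + y)^(α-1) (c + y)`.
-/

/-- The Stein kernel at `y` of a centered distribution with density `ρ` whose support has left
endpoint `a`. It takes the value `0` where `ρ y = 0`. -/
noncomputable def steinKernel (a : ℝ) (ρ : ℝ → ℝ) (y : ℝ) : ℝ :=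
  -(1 / ρ y) * ∫ x in Set.Ioc a y, x * ρ x

theorem steinKernel_eq_div_of_hasDerivAt {a y : ℝ} {ρ K : ℝ → ℝ} (hay : a ≤ y)
    (hK : ContinuousOn K (Set.Icc a y))
    (hK' : ∀ x ∈ Set.Ioo a y, HasDerivAt K (-(x * ρ x)) x)
    (hρ : IntervalIntegrable ρ volume a y) (hKa : K a = 0) :
    steinKernel a ρ y = K y / ρ y := by
  have hint : IntervalIntegrable (fun x ↦ x * ρ x) volume a y :=
    hρ.continuousOn_mul continuousOn_id
  have hFTC : ∫ x in a..y, -(x * ρ x) = K y - K a :=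
    intervalIntegral.integral_eq_sub_of_hasDerivAt_of_le hay hK hK' hint.neg
  rw [intervalIntegral.integral_neg, intervalIntegral.integral_of_le hay, hKa, sub_zero] at hFTC
  rw [steinKernel, neg_mul_comm, hFTC, one_div_mul_eq_div]

theorem intervalIntegrable_centeredBetaDensity {α : ℝ} (hα : 0 < α) (a b : ℝ) :
    IntervalIntegrable (centeredBetaDensity α) volume a b := by
  have hpow : IntervalIntegrable (fun u : ℝ ↦ u ^ (α - 1)) volume
      (α / (α + 1) + a) (α / (α + 1) + b) :=
    intervalIntegral.intervalIntegrable_rpow' (by linarith)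
  simpa only [centeredBetaDensity, add_sub_cancel_left] using!
    (hpow.comp_add_left (α / (α + 1))).const_mul α

theorem rpow_eq_rpow_sub_one_mul {x : ℝ} (hx : x ≠ 0) (r : ℝ) : x ^ r = x ^ (r - 1) * x := by
  rw [← rpow_add_one hx, sub_add_cancel]

theorem hasDerivAt_centeredBetaDensity_primitive {α x : ℝ} (hα : α + 1 ≠ 0)
    (hx : α / (α + 1) + x ≠ 0) :
    HasDerivAt (fun x ↦ α / (α + 1) * (α / (α + 1) + x) ^ α * (1 / (α + 1) - x))
      (-(x * centeredBetaDensity α x)) x := by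
  have hpow : HasDerivAt (fun x ↦ (α / (α + 1) + x) ^ α)
      (1 * α * (α / (α + 1) + x) ^ (α - 1)) x :=
    ((hasDerivAt_id x).const_add _).rpow_const (Or.inl hx)
  have hlin : HasDerivAt (fun x ↦ 1 / (α + 1) - x) (-1) x :=
    (hasDerivAt_id x).const_sub _
  refine ((hpow.const_mul (α / (α + 1))).mul hlin).congr_deriv ?_
  rw [rpow_eq_rpow_sub_one_mul hx α, centeredBetaDensity]
  generalize (α / (α + 1) + x) ^ (α - 1) = p
  field_simp
  ring

theorem continuous_centeredBetaDensity_primitive {α : ℝ} (hα : 0 ≤ α) :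
    Continuous fun x : ℝ ↦ α / (α + 1) * (α / (α + 1) + x) ^ α * (1 / (α + 1) - x) := by
  fun_prop (disch := assumption)

theorem centered_beta_stein_kernel_general {α y : ℝ} (hα : 0 < α) (hy : -(α / (α + 1)) < y) :
    steinKernel (-(α / (α + 1))) (centeredBetaDensity α) y =
      (1 / (α + 1)) * (α / (α + 1) + y) * (1 / (α + 1) - y) := by
  have hpos {x : ℝ} (hx : -(α / (α + 1)) < x) : 0 < α / (α + 1) + x := by linarith
  rw [steinKernel_eq_div_of_hasDerivAt hy.le
    (continuous_centeredBetaDensity_primitive hα.le).continuousOn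
    (fun x hx ↦ hasDerivAt_centeredBetaDensity_primitive (by positivity) (hpos hx.1).ne')
    (intervalIntegrable_centeredBetaDensity hα _ _)
    (by simp only [add_neg_cancel, zero_rpow hα.ne', mul_zero, zero_mul])]
  have hpow : (α / (α + 1) + y) ^ (α - 1) ≠ 0 := (rpow_pos_of_pos (hpos hy) _).ne'
  rw [rpow_eq_rpow_sub_one_mul (hpos hy).ne' α, centeredBetaDensity]
  generalize (α / (α + 1) + y) ^ (α - 1) = p at hpow ⊢
  field_simp

theorem centered_beta_stein_kernel (α : ℝ) (hα : 0 < α) (y : ℝ)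
    (hy : y ∈ Set.Ioo (-(α / (α + 1))) (1 / (α + 1))) :
    -(1 / centeredBetaDensity α y) *
        ∫ x in Set.Ioc (-(α / (α + 1))) y, x * centeredBetaDensity α x =
      (1 / (α + 1)) * (α / (α + 1) + y) * (1 / (α + 1) - y) :=
  centered_beta_stein_kernel_general hα hy.1
end
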